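/- Let (Ω, 𝓕, ℙ) be a probability space, let U : Ω → ℝⁿ and E : Ω → ℝᵐ be independent random vectors, let f : ℝⁿ → ℝᵐ be measurable, and set Y = f(U) + E. Then for ℙ∘U⁻¹-almost every u ∈ ℝⁿ, the conditional distribution of Y given U = u equals the law of E translated by f(u), i.e., it is the pushforward of the law of E under the map e ↦ f(u) + e. In particular, if E has a density ρ with respect to Lebesgue measure on ℝᵐ, then the conditional density of Y given U = u is y ↦ ρ(y − f(u)). -/

import Mathlib

open MeasureTheory ProbabilityTheory
open scoped ENNReal

/-- For independent random vectors `U`, `E` and `Y = f(U) + E`, the conditional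
distribution of `Y` given `U = u` is, for `law U`-a.e. `u`, the law of `E`
translated by `f u`. In particular, if `E` has density `ρ` w.r.t. Lebesgue
measure, then the conditional density of `Y` given `U = u` is `y ↦ ρ (y − f u)`. -/
theorem condDistrib_additive_noise {Ω : Type*} [MeasureSpace Ω]
    [IsProbabilityMeasure (ℙ : Measure Ω)] (n m : ℕ)
    (U : Ω → EuclideanSpace ℝ (Fin n)) (E : Ω → EuclideanSpace ℝ (Fin m))
    (hU : Measurable U) (hE : Measurable E)
    (hInd : IndepFun U E ℙ)
    (f : EuclideanSpace ℝ (Fin n) → EuclideanSpace ℝ (Fin m)) (hf : Measurable f)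
    (Y : Ω → EuclideanSpace ℝ (Fin m)) (hY : Y = fun ω => f (U ω) + E ω) :
    (∀ᵐ u ∂(Measure.map U ℙ),
        condDistrib Y U ℙ u = Measure.map (fun e => f u + e) (Measure.map E ℙ)) ∧
    ∀ ρ : EuclideanSpace ℝ (Fin m) → ℝ≥0∞, Measurable ρ →
      Measure.map E ℙ = volume.withDensity ρ →
      ∀ᵐ u ∂(Measure.map U ℙ),
        condDistrib Y U ℙ u = volume.withDensity (fun y => ρ (y - f u)) := by
  have hYm : Measurable Y := by rw [hY]; fun_prop
  have hEp : IsProbabilityMeasure (Measure.map E ℙ) := Measure.isProbabilityMeasure_map hE.aemeasurable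
  have hUp : IsProbabilityMeasure (Measure.map U ℙ) := Measure.isProbabilityMeasure_map hU.aemeasurable
  have hg : Measurable (fun p : EuclideanSpace ℝ (Fin n) × EuclideanSpace ℝ (Fin m) =>
      f p.1 + p.2) := by fun_prop
  have h1 : ∀ᵐ u ∂(Measure.map U ℙ),
      condDistrib Y U ℙ u = Measure.map (fun e => f u + e) (Measure.map E ℙ) := by
    let κ : Kernel (EuclideanSpace ℝ (Fin n)) (EuclideanSpace ℝ (Fin m)) :=
      (Kernel.id ×ₖ Kernel.const _ (Measure.map E ℙ)).map (fun p => f p.1 + p.2)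
    have hκ : ∀ u, κ u = Measure.map (fun e => f u + e) (Measure.map E ℙ) := by
      intro u
      simp only [κ]
      rw [Kernel.map_apply _ hg, Kernel.prod_apply, Kernel.id_apply, Kernel.const_apply,
        Measure.dirac_prod, Measure.map_map hg (by fun_prop)]
      rfl
    have hfin : IsMarkovKernel κ := Kernel.IsMarkovKernel.map _ hg
    have key : Measure.map (fun ω => (U ω, Y ω)) ℙ = Measure.map U ℙ ⊗ₘ κ := by
      have hpair := (indepFun_iff_map_prod_eq_prod_map_map hU.aemeasurable hE.aemeasurable).1 hInd
      have hG : Measurable (fun p : EuclideanSpace ℝ (Fin n) × EuclideanSpace ℝ (Fin m) =>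
        (p.1, f p.1 + p.2)) := by fun_prop
      have e1 : Measure.map (fun ω => (U ω, Y ω)) ℙ =
          Measure.map (fun p => (p.1, f p.1 + p.2))
            ((Measure.map U ℙ).prod (Measure.map E ℙ)) := by
        rw [← hpair, Measure.map_map hG (by fun_prop), hY]
        rfl
      rw [e1]
      ext s hs
      rw [Measure.map_apply hG hs, Measure.prod_apply (hG hs), Measure.compProd_apply hs]
      refine lintegral_congr fun u => ?_
      rw [hκ, Measure.map_apply (by fun_prop) (measurable_prodMk_left hs)]
      rfl
    filter_upwards [condDistrib_ae_eq_of_measure_eq_compProd U hYm.aemeasurable key] with u hu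
    rw [hu, hκ]
  refine ⟨h1, fun ρ hρ hd => ?_⟩
  filter_upwards [h1] with u hu
  rw [hu, hd]
  ext s hs
  have hm : Measurable (fun e : EuclideanSpace ℝ (Fin m) => f u + e) := by fun_prop
  rw [Measure.map_apply hm hs, withDensity_apply _ (hm hs), withDensity_apply _ hs,
    ← lintegral_indicator (hm hs), ← lintegral_indicator hs,
    ← lintegral_add_left_eq_self (s.indicator _) (f u)]
  refine lintegral_congr fun e => ?_
  simp [Set.indicator]
  rfl
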